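/- arXiv:2310.15822 — 3 statements merged into one kernel-verified Lean document; each statement's English description precedes it below -/
import Mathlib

section
/- Let A be a commutative ring, d ≥ 1, and let M ∈ M_{2d}(A) satisfy M^j = M (where M^j := J·M^⊤·J^{−1}) and be such that the matrix M·J is alternating, i.e. (MJ)^⊤ = −MJ and MJ has zero diagonal (this is automatic when 2 is a nonzerodivisor in A). Then the Pfaffian characteristic polynomial Pf_M(λ) := Pf((λ·I_{2d} − M)·J) ∈ A[λ], which is monic of degree d, annihilates M: Pf_M(M) = 0 in M_{2d}(A). -/
/-!
STATEMENT 0: Let `A` be a commutative ring, `d ≥ 1`, and `M ∈ M_{2d}(A)` with `M^j = M`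
(where `M^j = J Mᵀ J⁻¹`, `J⁻¹ = -J`) and such that `M·J` is alternating. Then the Pfaffian
characteristic polynomial `Pf_M(λ) = Pf((λ·I - M)·J) ∈ A[λ]` is monic of degree `d` and
annihilates `M`: `Pf_M(M) = 0`.
-/

open scoped TensorProduct
open Matrix

universe u

namespace SympDet

/-- The standard symplectic matrix `J = [[0, I_d], [-I_d, 0]]`. -/
def Jmat (d : ℕ) (R : Type*) [CommRing R] : Matrix (Fin (2 * d)) (Fin (2 * d)) R :=
  Matrix.of fun k l =>
    if (k : ℕ) + d = (l : ℕ) then 1 else if (l : ℕ) + d = (k : ℕ) then -1 else 0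

/-- The symplectic standard involution `M ↦ J Mᵀ J⁻¹` (note `J⁻¹ = -J`). -/
def sympTr {d : ℕ} {R : Type*} [CommRing R] (M : Matrix (Fin (2 * d)) (Fin (2 * d)) R) :
    Matrix (Fin (2 * d)) (Fin (2 * d)) R :=
  Jmat d R * Mᵀ * (-(Jmat d R))

/-- Auxiliary indexing for the Pfaffian: `i ↦ 2i`. -/
def fpair0 {d : ℕ} (i : Fin d) : Fin (2 * d) := ⟨2 * (i : ℕ), by have := i.isLt; omega⟩

/-- Auxiliary indexing for the Pfaffian: `i ↦ 2i + 1`. -/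
def fpair1 {d : ℕ} (i : Fin d) : Fin (2 * d) := ⟨2 * (i : ℕ) + 1, by have := i.isLt; omega⟩

/-- The combinatorial (integer coefficient) Pfaffian of a `2d × 2d` matrix: the sum over
perfect matchings of signed products of entries. -/
def pfAux {d : ℕ} {R : Type*} [CommRing R] (M : Matrix (Fin (2 * d)) (Fin (2 * d)) R) : R :=
  ∑ σ : Equiv.Perm (Fin (2 * d)),
    if (∀ i : Fin d, σ (fpair0 i) < σ (fpair1 i)) ∧
        (∀ i j : Fin d, i < j → σ (fpair0 i) < σ (fpair0 j)) then
      ((Equiv.Perm.sign σ : ℤ) : R) * ∏ i : Fin d, M (σ (fpair0 i)) (σ (fpair1 i))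
    else 0

/-- The Pfaffian, normalized so that `Pf (J) = 1`. -/
def Pf {d : ℕ} {R : Type*} [CommRing R] (M : Matrix (Fin (2 * d)) (Fin (2 * d)) R) : R :=
  ((pfAux (Jmat d ℤ) : ℤ) : R) * pfAux M

/-- The Pfaffian characteristic polynomial `Pf_M(λ) = Pf((λ·I_{2d} − M)·J) ∈ A[λ]`. -/
noncomputable def pfCharpoly {d : ℕ} {A : Type u} [CommRing A]
    (M : Matrix (Fin (2 * d)) (Fin (2 * d)) A) : Polynomial A :=
  Pf (((Polynomial.X : Polynomial A) • (1 : Matrix (Fin (2 * d)) (Fin (2 * d)) (Polynomial A)) -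
      M.map Polynomial.C) * Jmat d (Polynomial A))

end SympDet

/-!
Summing `sign σ * ∏ i, N (σ (i, 0)) (σ (i, 1))` over one permutation `σ` per perfect matching, i.e.
over a left transversal of the hyperoctahedral group, gives the Pfaffian of `N`. Replacing the index
`k` by `a` in every summand gives, on the one hand, the `(k, a)` entry of `C * Nᵀ + Cᵀ * N`, where
`C` is the matrix of formal derivatives of the Pfaffian. On the other hand it gives the Pfaffian of
a matrix with a repeated index if `k ≠ a`, hence zero: the matchings cancel under the transposition
`(k a)`. So `(Cᵀ - C) * N = Pf N • 1` for alternating `N`. For `N = (λ - M) * J` this makes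
`Pf_M(λ) • 1` a left multiple of `λ - M`, and evaluating at `λ = M` gives zero, exactly as for the
usual Cayley–Hamilton theorem.
-/

namespace SympDet

open Equiv Finset Polynomial

section Alternating

variable {n m R : Type*} [CommRing R] {N : Matrix n n R}

/-- Alternating matrices: skew-symmetric with zero diagonal. -/
structure IsAlternating (N : Matrix n n R) : Prop where
  transpose_eq : Nᵀ = -N
  diag_eq_zero : ∀ i, N i i = 0

lemma apply_eq_neg_of_transpose_eq_neg (hN : Nᵀ = -N) (i j : n) : N i j = -N j i :=
  congrFun₂ hN j i

lemma IsAlternating.submatrix (hN : IsAlternating N) (f : m → n) :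
    IsAlternating (N.submatrix f f) where
  transpose_eq := by rw [transpose_submatrix, hN.transpose_eq]; rfl
  diag_eq_zero i := hN.diag_eq_zero (f i)

end Alternating

section Matching

variable {K n R : Type*} [CommRing R] (e : K × Bool ≃ n) {N : Matrix n n R} {σ : Perm n}

/-- The permutation acting by `f i` on the pair `{e (i, false), e (i, true)}`, for each `i`. -/
def pairFlip (f : K → Perm Bool) : Perm n := e.permCongr (prodCongrRight f)

/-- The permutation sending the pair `(e (i, false), e (i, true))` to the pair indexed by `π i`. -/
def pairPerm (π : Perm K) : Perm n := e.permCongr (prodCongrLeft fun _ ↦ π)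

/-- The involution exchanging `e (i, false)` and `e (i, true)` for every `i`. It encodes the perfect
matching given by `e`; the one given by `σ ∘ e` is then `σ * partner e * σ⁻¹`. -/
def partner : Perm n := pairFlip e fun _ ↦ boolNot

/-- The hyperoctahedral group, which permutes and flips the pairs of the matching given by `e`. -/
def hyperoctahedral : Subgroup (Perm n) :=
  Subgroup.closure (Set.range (pairFlip e) ∪ Set.range (pairPerm e))

@[simp]
lemma pairFlip_apply (f : K → Perm Bool) (i : K) (b : Bool) :
    pairFlip e f (e (i, b)) = e (i, f i b) := by
  simp [pairFlip, permCongr_apply]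

@[simp]
lemma pairPerm_apply (π : Perm K) (i : K) (b : Bool) : pairPerm e π (e (i, b)) = e (π i, b) := by
  simp [pairPerm, permCongr_apply]

@[simp]
lemma partner_apply (i : K) (b : Bool) : partner e (e (i, b)) = e (i, !b) := by
  simp [partner]

lemma pairFlip_mem_hyperoctahedral (f : K → Perm Bool) : pairFlip e f ∈ hyperoctahedral e :=
  Subgroup.subset_closure (.inl ⟨f, rfl⟩)

lemma pairPerm_mem_hyperoctahedral (π : Perm K) : pairPerm e π ∈ hyperoctahedral e :=
  Subgroup.subset_closure (.inr ⟨π, rfl⟩)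

lemma perm_bool_eq_one_or_boolNot : ∀ f : Perm Bool, f = 1 ∨ f = boolNot := by
  decide

lemma hyperoctahedral_le_centralizer : hyperoctahedral e ≤ Subgroup.centralizer {partner e} := by
  refine (Subgroup.closure_le _).2 ?_
  rintro _ (⟨f, rfl⟩ | ⟨π, rfl⟩) <;>
    rw [SetLike.mem_coe, Subgroup.mem_centralizer_singleton_iff] <;>
    refine Equiv.ext (e.surjective.forall.2 fun ⟨i, b⟩ ↦ ?_)
  · rcases perm_bool_eq_one_or_boolNot (f i) with hf | hf <;> simp [hf]
  · simp

lemma partner_ne (p : n) : partner e p ≠ p := by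
  obtain ⟨⟨i, b⟩, rfl⟩ := e.surjective p
  simp

lemma partner_eq_of_swap_mem_hyperoctahedral [DecidableEq n] {p q : n} (hpq : p ≠ q)
    (h : swap p q ∈ hyperoctahedral e) : partner e p = q := by
  by_contra hq
  have hcomm := Subgroup.mem_centralizer_singleton_iff.1 (hyperoctahedral_le_centralizer e h)
  have hp := DFunLike.congr_fun hcomm p
  rw [Perm.mul_apply, Perm.mul_apply, swap_apply_left,
    swap_apply_of_ne_of_ne (partner_ne e p) hq] at hp
  exact hpq ((partner e).injective hp)

variable [Fintype n] [DecidableEq n]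

lemma sign_pairPerm [Finite K] (π : Perm K) : Perm.sign (pairPerm e π) = 1 := by
  classical
  have := Fintype.ofFinite K
  rw [pairPerm, Perm.sign_permCongr, Perm.sign_prodCongrLeft, Fintype.prod_bool, Int.units_mul_self]

variable [Fintype K]

/-- The summand of the Pfaffian of `N` belonging to the perfect matching given by `σ ∘ e`. -/
def pfTerm (N : Matrix n n R) (σ : Perm n) : R :=
  ((Perm.sign σ : ℤ) : R) * ∏ i, N (σ (e (i, false))) (σ (e (i, true)))

lemma pfTerm_mul_left (τ σ : Perm n) :
    pfTerm e N (τ * σ) = ((Perm.sign τ : ℤ) : R) * pfTerm e (N.submatrix τ τ) σ := by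
  simp [pfTerm, mul_assoc]

lemma pfTerm_eq_zero_of_apply_partner_eq_zero {p : n} (h : N (σ p) (σ (partner e p)) = 0)
    (hN : Nᵀ = -N) : pfTerm e N σ = 0 := by
  obtain ⟨⟨i, b⟩, rfl⟩ := e.surjective p
  have factor_eq_zero : N (σ (e (i, false))) (σ (e (i, true))) = 0 := by
    cases b
    · simpa using h
    · rw [apply_eq_neg_of_transpose_eq_neg hN]
      simpa using h
  rw [pfTerm, Finset.prod_eq_zero (mem_univ i) factor_eq_zero, mul_zero]

lemma sign_pairFlip (f : K → Perm Bool) : Perm.sign (pairFlip e f) = ∏ i, Perm.sign (f i) := by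
  classical
  rw [pairFlip, Perm.sign_permCongr, Perm.sign_prodCongrRight]

lemma pfTerm_mul_pairFlip (hN : Nᵀ = -N) (σ : Perm n) (f : K → Perm Bool) :
    pfTerm e N (σ * pairFlip e f) = pfTerm e N σ := by
  have flip_entry (i : K) : N (σ (e (i, f i false))) (σ (e (i, f i true))) =
      ((Perm.sign (f i) : ℤ) : R) * N (σ (e (i, false))) (σ (e (i, true))) := by
    rcases perm_bool_eq_one_or_boolNot (f i) with hf | hf
    · simp [hf]
    · have sign_boolNot : Perm.sign boolNot = -1 := by decide
      simp [hf, sign_boolNot, apply_eq_neg_of_transpose_eq_neg hN (σ (e (i, true)))]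
  have sign_sq : (∏ i, ((Perm.sign (f i) : ℤ) : R)) * ∏ i, ((Perm.sign (f i) : ℤ) : R) = 1 := by
    rw [← Finset.prod_mul_distrib]
    exact Finset.prod_eq_one fun i _ ↦ by
      rw [← Int.cast_mul, ← Units.val_mul, Int.units_mul_self, Units.val_one, Int.cast_one]
  simp only [pfTerm, Perm.mul_apply, pairFlip_apply, flip_entry, Finset.prod_mul_distrib,
    Perm.sign_mul, sign_pairFlip]
  push_cast
  linear_combination
    ((Perm.sign σ : ℤ) : R) * (∏ i, N (σ (e (i, false))) (σ (e (i, true)))) * sign_sq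

lemma pfTerm_mul_pairPerm (σ : Perm n) (π : Perm K) :
    pfTerm e N (σ * pairPerm e π) = pfTerm e N σ := by
  simp only [pfTerm, Perm.mul_apply, pairPerm_apply, Perm.sign_mul, sign_pairPerm, mul_one]
  rw [Equiv.prod_comp π fun i ↦ N (σ (e (i, false))) (σ (e (i, true)))]

lemma pfTerm_mul_of_mem {h : Perm n} (hN : Nᵀ = -N) (hh : h ∈ hyperoctahedral e) (σ : Perm n) :
    pfTerm e N (σ * h) = pfTerm e N σ := by
  induction hh using Subgroup.closure_induction generalizing σ with
  | mem h hh =>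
    obtain ⟨f, rfl⟩ | ⟨π, rfl⟩ := hh
    · exact pfTerm_mul_pairFlip e hN σ f
    · exact pfTerm_mul_pairPerm e σ π
  | one => rw [mul_one]
  | mul g h _ _ ihg ihh => rw [← mul_assoc, ihh, ihg]
  | inv h _ ih => rw [← ih (σ * h⁻¹), inv_mul_cancel_right]

lemma pfTerm_eq_of_inv_mul_mem {τ : Perm n} (hN : Nᵀ = -N) (h : σ⁻¹ * τ ∈ hyperoctahedral e) :
    pfTerm e N σ = pfTerm e N τ := by
  rw [← pfTerm_mul_of_mem e hN h σ, mul_inv_cancel_left]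

lemma sum_pfTerm_eq_zero_of_row_eq {S : Finset (Perm n)}
    (hS : Subgroup.IsComplement (S : Set (Perm n)) (hyperoctahedral e : Set (Perm n)))
    (hN : IsAlternating N) {a b : n} (hab : a ≠ b) (hrow : N a = N b) :
    ∑ σ ∈ S, pfTerm e N σ = 0 := by
  have exists_rep (σ : Perm n) :
      ∃ s ∈ S, s⁻¹ * σ ∈ hyperoctahedral e ∧ ∀ t ∈ S, t⁻¹ * σ ∈ hyperoctahedral e → t = s := by
    obtain ⟨s, hs, hs_unique⟩ := Subgroup.isComplement_iff_existsUnique_inv_mul_mem.1 hS σ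
    exact ⟨s, s.2, hs, fun t ht h ↦ congrArg Subtype.val (hs_unique ⟨t, ht⟩ h)⟩
  choose rep rep_mem rep_inv_mul_mem rep_unique using exists_rep
  have submatrix_swap : N.submatrix (swap a b) (swap a b) = N := by
    have row_swap (i : n) : N (swap a b i) = N i := by
      rw [swap_apply_def]
      split_ifs with hi hi <;> simp [hi, hrow]
    ext i j
    rw [submatrix_apply, row_swap, apply_eq_neg_of_transpose_eq_neg hN.transpose_eq, row_swap,
      ← apply_eq_neg_of_transpose_eq_neg hN.transpose_eq]
  refine Finset.sum_involution (fun σ _ ↦ rep (swap a b * σ)) (fun σ _ ↦ ?_) (fun σ _ hσ hfix ↦ ?_)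
    (fun σ _ ↦ rep_mem _) fun σ hσ ↦ ?_
  · rw [pfTerm_eq_of_inv_mul_mem e hN.transpose_eq (rep_inv_mul_mem _), pfTerm_mul_left,
      submatrix_swap, Perm.sign_swap hab]
    simp
  · have swap_mem : swap (σ⁻¹ a) (σ⁻¹ b) ∈ hyperoctahedral e := by
      have h := rep_inv_mul_mem (swap a b * σ)
      rwa [hfix, swap_mul_eq_mul_swap, inv_mul_cancel_left] at h
    have hpartner := partner_eq_of_swap_mem_hyperoctahedral e (σ⁻¹.injective.ne hab) swap_mem
    refine hσ (pfTerm_eq_zero_of_apply_partner_eq_zero e (p := σ⁻¹ a) ?_ hN.transpose_eq)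
    rw [hpartner]
    simp [hrow, hN.diag_eq_zero]
  · refine (rep_unique _ σ hσ ?_).symm
    simpa [mul_assoc] using inv_mem (rep_inv_mul_mem (swap a b * σ))

variable [DecidableEq K]

/-- The matrix of formal partial derivatives of `pfTerm e N σ` in the entries of `N`. -/
def pfTermDeriv (N : Matrix n n R) (σ : Perm n) : Matrix n n R :=
  ((Perm.sign σ : ℤ) : R) • ∑ i, Matrix.single (σ (e (i, false))) (σ (e (i, true)))
    (∏ j ∈ univ.erase i, N (σ (e (j, false))) (σ (e (j, true))))

lemma pfTermDeriv_mul_transpose_add (σ : Perm n) (k a : n) :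
    (pfTermDeriv e N σ * Nᵀ + (pfTermDeriv e N σ)ᵀ * N) k a =
      pfTerm e (N.submatrix (Function.update id k a) (Function.update id k a)) σ := by
  obtain ⟨⟨i₀, b⟩, hk⟩ := (e.trans σ).surjective k
  rw [Equiv.trans_apply] at hk
  have pair_ne (i : K) (hi : i ≠ i₀) (c : Bool) : σ (e (i, c)) ≠ k := by
    simp [← hk, hi]
  have other_factors : ∏ j ∈ univ.erase i₀, N.submatrix (Function.update id k a)
      (Function.update id k a) (σ (e (j, false))) (σ (e (j, true))) =
      ∏ j ∈ univ.erase i₀, N (σ (e (j, false))) (σ (e (j, true))) :=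
    Finset.prod_congr rfl fun j hj ↦ by simp [pair_ne j (Finset.ne_of_mem_erase hj)]
  rw [pfTerm, ← Finset.mul_prod_erase univ _ (mem_univ i₀), other_factors]
  simp only [pfTermDeriv, Matrix.add_apply, Matrix.smul_mul, Matrix.sum_mul, Matrix.transpose_smul,
    Matrix.transpose_sum, Matrix.transpose_single, Matrix.smul_apply, Matrix.sum_apply]
  rw [← smul_add, ← Finset.sum_add_distrib, smul_eq_mul]
  congr 1
  rw [Finset.sum_eq_single i₀ (fun i _ hi ↦ ?_) (by simp)]
  · cases b <;> simp [← hk, mul_comm]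
  · simp [(pair_ne i hi _).symm]

/-- The Pfaffian analogue of the adjugate: the formal gradient of `∑ σ ∈ S, pfTerm e N σ`,
antisymmetrized. -/
def pfAdjugate (S : Finset (Perm n)) (N : Matrix n n R) : Matrix n n R :=
  ∑ σ ∈ S, ((pfTermDeriv e N σ)ᵀ - pfTermDeriv e N σ)

theorem pfAdjugate_mul {S : Finset (Perm n)}
    (hS : Subgroup.IsComplement (S : Set (Perm n)) (hyperoctahedral e : Set (Perm n)))
    (hN : IsAlternating N) :
    pfAdjugate e S N * N = (∑ σ ∈ S, pfTerm e N σ) • (1 : Matrix n n R) := by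
  have gradient_mul : pfAdjugate e S N * N =
      ∑ σ ∈ S, (pfTermDeriv e N σ * Nᵀ + (pfTermDeriv e N σ)ᵀ * N) := by
    rw [pfAdjugate, Finset.sum_mul]
    refine Finset.sum_congr rfl fun σ _ ↦ ?_
    rw [hN.transpose_eq, sub_mul, mul_neg, neg_add_eq_sub]
  ext k a
  rw [gradient_mul, Matrix.sum_apply]
  simp only [pfTermDeriv_mul_transpose_add]
  obtain rfl | hka := eq_or_ne k a
  · simp [Function.update_eq_self_iff.2]
  · rw [sum_pfTerm_eq_zero_of_row_eq e hS (hN.submatrix _) hka]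
    · simp [hka]
    · ext j
      simp [hka.symm]

end Matching

section Normalized

variable {d : ℕ} {n : Type*} [LinearOrder n] [Fintype n] (e : Fin d × Bool ≃ n) {σ τ : Perm n}

/-- The permutations `σ` for which `σ ∘ e` lists each pair of its matching in increasing order, and
the pairs by increasing minima: one permutation per perfect matching. -/
def normalizedPerms : Finset (Perm n) :=
  {σ | (∀ i, σ (e (i, false)) < σ (e (i, true))) ∧
    ∀ i j, i < j → σ (e (i, false)) < σ (e (j, false))}

lemma mem_normalizedPerms : σ ∈ normalizedPerms e ↔
    (∀ i, σ (e (i, false)) < σ (e (i, true))) ∧ StrictMono fun i ↦ σ (e (i, false)) := by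
  simp [normalizedPerms, StrictMono]

lemma exists_mul_mem_normalizedPerms (σ : Perm n) :
    ∃ h ∈ hyperoctahedral e, σ * h ∈ normalizedPerms e := by
  have exists_flip (i : Fin d) : ∃ g : Perm Bool, σ (e (i, g false)) < σ (e (i, g true)) := by
    have hne : σ (e (i, false)) ≠ σ (e (i, true)) := by simp
    rcases hne.lt_or_gt with hlt | hgt
    · exact ⟨1, hlt⟩
    · exact ⟨boolNot, hgt⟩
  choose f hf using exists_flip
  let minima : Fin d → n := fun i ↦ σ (e (i, f i false))
  have minima_injective : Function.Injective minima := fun i j hij ↦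
    congrArg Prod.fst (e.injective (σ.injective hij))
  have sorted : StrictMono (minima ∘ Tuple.sort minima) :=
    (Tuple.monotone_sort minima).strictMono_of_injective
      (minima_injective.comp (Tuple.sort minima).injective)
  refine ⟨pairFlip e f * pairPerm e (Tuple.sort minima),
    mul_mem (pairFlip_mem_hyperoctahedral e f) (pairPerm_mem_hyperoctahedral e _),
    (mem_normalizedPerms e).2 ⟨fun i ↦ ?_, fun i j hij ↦ ?_⟩⟩
  · simpa using hf _
  · simpa using sorted hij

lemma range_minima (hσ : σ ∈ normalizedPerms e) :
    Set.range (fun i ↦ σ (e (i, false))) = {x | x < (σ * partner e * σ⁻¹) x} := by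
  have hlt := ((mem_normalizedPerms e).1 hσ).1
  ext x
  obtain ⟨⟨i, b⟩, rfl⟩ := (e.trans σ).surjective x
  cases b
  · simp [hlt]
  · simp [(hlt i).le]

lemma eq_of_mem_normalizedPerms (hσ : σ ∈ normalizedPerms e) (hτ : τ ∈ normalizedPerms e)
    (hconj : σ * partner e * σ⁻¹ = τ * partner e * τ⁻¹) : σ = τ := by
  have minima_eq : (fun i ↦ σ (e (i, false))) = fun i ↦ τ (e (i, false)) :=
    (((mem_normalizedPerms e).1 hσ).2.range_inj ((mem_normalizedPerms e).1 hτ).2).1 <| by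
      rw [range_minima e hσ, range_minima e hτ, hconj]
  refine Equiv.ext (e.surjective.forall.2 fun ⟨i, b⟩ ↦ ?_)
  have hmin : σ (e (i, false)) = τ (e (i, false)) := congrFun minima_eq i
  cases b
  · exact hmin
  · calc σ (e (i, true)) = (σ * partner e * σ⁻¹) (σ (e (i, false))) := by simp
      _ = (τ * partner e * τ⁻¹) (τ (e (i, false))) := by rw [hconj, hmin]
      _ = τ (e (i, true)) := by simp

theorem isComplement_normalizedPerms :
    Subgroup.IsComplement (normalizedPerms e : Set (Perm n))
      (hyperoctahedral e : Set (Perm n)) := by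
  refine Subgroup.isComplement_iff_existsUnique_inv_mul_mem.2 fun σ ↦ ?_
  obtain ⟨h, hh, hσh⟩ := exists_mul_mem_normalizedPerms e σ
  refine ⟨⟨σ * h, hσh⟩, by simpa using hh, fun ⟨τ, hτ⟩ hτσ ↦ Subtype.ext ?_⟩
  have hcomm : τ⁻¹ * (σ * h) * partner e = partner e * (τ⁻¹ * (σ * h)) := by
    refine Subgroup.mem_centralizer_singleton_iff.1 (hyperoctahedral_le_centralizer e ?_)
    simpa [mul_assoc] using mul_mem hτσ hh
  refine eq_of_mem_normalizedPerms e hτ hσh ?_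
  rw [eq_mul_inv_iff_mul_eq]
  calc τ * partner e * τ⁻¹ * (σ * h) = τ * (partner e * (τ⁻¹ * (σ * h))) := by group
    _ = σ * h * partner e := by rw [← hcomm]; group

end Normalized

section Pfaffian

variable {d : ℕ} {R : Type*} [CommRing R]

/-- `(i, b) ↦ 2 * i + b`, which enumerates the pairs `(fpair0 i, fpair1 i)`. -/
def pairEquiv (d : ℕ) : Fin d × Bool ≃ Fin (2 * d) :=
  ((Equiv.refl _).prodCongr finTwoEquiv.symm).trans
    (finProdFinEquiv.trans (finCongr (mul_comm d 2)))

lemma pairEquiv_false (i : Fin d) : pairEquiv d (i, false) = fpair0 i := by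
  ext; simp [pairEquiv, finTwoEquiv, fpair0]

lemma pairEquiv_true (i : Fin d) : pairEquiv d (i, true) = fpair1 i := by
  ext; simp [pairEquiv, finTwoEquiv, fpair1, add_comm]

lemma pfAux_eq_sum_normalizedPerms (N : Matrix (Fin (2 * d)) (Fin (2 * d)) R) :
    pfAux N = ∑ σ ∈ normalizedPerms (pairEquiv d), pfTerm (pairEquiv d) N σ := by
  rw [normalizedPerms, Finset.sum_filter]
  simp only [pairEquiv_false, pairEquiv_true, pfTerm, pfAux]

theorem exists_mul_eq_Pf_smul_one {N : Matrix (Fin (2 * d)) (Fin (2 * d)) R}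
    (hN : IsAlternating N) : ∃ G : Matrix (Fin (2 * d)) (Fin (2 * d)) R, G * N = Pf N • 1 := by
  refine ⟨((pfAux (Jmat d ℤ) : ℤ) : R) • pfAdjugate (pairEquiv d) (normalizedPerms (pairEquiv d)) N,
    ?_⟩
  rw [Matrix.smul_mul, pfAdjugate_mul _ (isComplement_normalizedPerms _) hN,
    ← pfAux_eq_sum_normalizedPerms, smul_smul, Pf]

lemma natDegree_pfAux_le {N : Matrix (Fin (2 * d)) (Fin (2 * d)) R[X]} {k : ℕ}
    (hN : ∀ i j, (N i j).natDegree ≤ k) : (pfAux N).natDegree ≤ d * k := by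
  refine natDegree_sum_le_of_forall_le _ _ fun σ _ ↦ ?_
  split_ifs
  · rw [← C_eq_intCast]
    calc _ ≤ (∏ i : Fin d, N (σ (fpair0 i)) (σ (fpair1 i))).natDegree := natDegree_C_mul_le _ _
      _ ≤ ∑ i : Fin d, (N (σ (fpair0 i)) (σ (fpair1 i))).natDegree := natDegree_prod_le _ _
      _ ≤ ∑ _i : Fin d, k := Finset.sum_le_sum fun i _ ↦ hN _ _
      _ = d * k := by simp
  · simp

lemma coeff_pfAux {N : Matrix (Fin (2 * d)) (Fin (2 * d)) R[X]} {k : ℕ}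
    (hN : ∀ i j, (N i j).natDegree ≤ k) :
    (pfAux N).coeff (d * k) = pfAux (N.map fun p ↦ p.coeff k) := by
  rw [pfAux, finsetSum_coeff, pfAux]
  refine Finset.sum_congr rfl fun σ _ ↦ ?_
  split_ifs
  · have coeff_prod := coeff_prod_of_natDegree_le univ
      (fun i : Fin d ↦ N (σ (fpair0 i)) (σ (fpair1 i))) k fun i _ ↦ hN _ _
    rw [Finset.card_fin] at coeff_prod
    rw [← C_eq_intCast, coeff_C_mul, coeff_prod]
    rfl
  · simp

end Pfaffian

section StandardSymplectic

variable {d : ℕ}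

/-- The identification of `Fin d ⊕ Fin d` with `Fin (2 * d)` sending the right summand to the upper
half. -/
def halfEquiv (d : ℕ) : Fin d ⊕ Fin d ≃ Fin (2 * d) :=
  finSumFinEquiv.trans (finCongr (two_mul d).symm)

@[simp]
lemma val_halfEquiv_inl (i : Fin d) : (halfEquiv d (.inl i) : ℕ) = i := rfl

@[simp]
lemma val_halfEquiv_inr (i : Fin d) : (halfEquiv d (.inr i) : ℕ) = d + i := rfl

/-- The permutation sending the pair `(fpair0 i, fpair1 i)` to `(i, i + d)`: it describes the only
perfect matching that contributes to `Pf J`. -/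
def halfPerm (d : ℕ) : Perm (Fin (2 * d)) :=
  (pairEquiv d).symm.trans ((prodComm _ _).trans ((boolProdEquivSum _).trans (halfEquiv d)))

@[simp]
lemma halfPerm_pairEquiv_false (i : Fin d) :
    halfPerm d (pairEquiv d (i, false)) = halfEquiv d (.inl i) := by
  simp [halfPerm]

@[simp]
lemma halfPerm_pairEquiv_true (i : Fin d) :
    halfPerm d (pairEquiv d (i, true)) = halfEquiv d (.inr i) := by
  simp [halfPerm]

lemma halfPerm_mem_normalizedPerms : halfPerm d ∈ normalizedPerms (pairEquiv d) := by
  refine (mem_normalizedPerms _).2 ⟨fun i ↦ ?_, fun i j hij ↦ ?_⟩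
  · rw [Fin.lt_def, halfPerm_pairEquiv_false, halfPerm_pairEquiv_true, val_halfEquiv_inl,
      val_halfEquiv_inr]
    omega
  · simpa only [halfPerm_pairEquiv_false, Fin.lt_def, val_halfEquiv_inl] using hij

lemma eq_halfPerm {σ : Perm (Fin (2 * d))} (hσ : σ ∈ normalizedPerms (pairEquiv d))
    (hpair : ∀ i, (σ (pairEquiv d (i, true)) : ℕ) = σ (pairEquiv d (i, false)) + d) :
    σ = halfPerm d := by
  let minima : Fin d → Fin d := fun i ↦ ⟨σ (pairEquiv d (i, false)), by
    have := (σ (pairEquiv d (i, true))).isLt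
    have := hpair i
    omega⟩
  have minima_strictMono : StrictMono minima := ((mem_normalizedPerms _).1 hσ).2
  have hmin (i : Fin d) : (σ (pairEquiv d (i, false)) : ℕ) = i :=
    congrArg Fin.val minima_strictMono.apply_eq
  refine Equiv.ext ((pairEquiv d).surjective.forall.2 fun ⟨i, b⟩ ↦ Fin.ext ?_)
  cases b
  · simp [hmin]
  · simp [hpair, hmin, add_comm]

variable {R : Type*} [CommRing R]

lemma val_eq_add_of_Jmat_ne_zero {k l : Fin (2 * d)} (hkl : k < l) (h : Jmat d R k l ≠ 0) :
    (l : ℕ) = k + d := by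
  contrapose! h
  rw [Jmat, Matrix.of_apply, if_neg (by omega), if_neg (by omega)]

variable (d R)

lemma Jmat_eq_neg_J :
    Jmat d R = -(Matrix.J (Fin d) R).submatrix (halfEquiv d).symm (halfEquiv d).symm := by
  ext k l
  obtain ⟨k | k, rfl⟩ := (halfEquiv d).surjective k <;>
    obtain ⟨l | l, rfl⟩ := (halfEquiv d).surjective l <;>
    simp only [Jmat, Matrix.J, of_apply, val_halfEquiv_inl, val_halfEquiv_inr, Matrix.neg_apply,
      submatrix_apply, symm_apply_apply, fromBlocks_apply₁₁, fromBlocks_apply₁₂, fromBlocks_apply₂₁,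
      fromBlocks_apply₂₂, Matrix.zero_apply, Matrix.one_apply, Fin.ext_iff] <;>
    grind

lemma Jmat_mul_self : Jmat d R * Jmat d R = -1 := by
  rw [Jmat_eq_neg_J, neg_mul_neg, submatrix_mul_equiv, Matrix.J_squared, submatrix_neg]
  simp

lemma isAlternating_Jmat : IsAlternating (Jmat d R) where
  transpose_eq := by
    rw [Jmat_eq_neg_J, transpose_neg, transpose_submatrix, Matrix.J_transpose, submatrix_neg]
    rfl
  diag_eq_zero i := by
    have hi := i.isLt
    rw [Jmat, Matrix.of_apply, if_neg (by omega), if_neg (by omega)]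

lemma Jmat_map {S : Type*} [CommRing S] (φ : R →+* S) : (Jmat d R).map φ = Jmat d S := by
  ext k l
  simp [Jmat, apply_ite φ]

lemma pfAux_Jmat : pfAux (Jmat d R) = ((Perm.sign (halfPerm d) : ℤ) : R) := by
  rw [pfAux_eq_sum_normalizedPerms, Finset.sum_eq_single_of_mem _ halfPerm_mem_normalizedPerms]
  · simp [pfTerm, Jmat, add_comm d]
  · intro σ hσ hne
    obtain ⟨i, hi⟩ : ∃ i, (σ (pairEquiv d (i, true)) : ℕ) ≠ σ (pairEquiv d (i, false)) + d := by
      by_contra! hpair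
      exact hne (eq_halfPerm hσ hpair)
    rw [pfTerm, Finset.prod_eq_zero (mem_univ i), mul_zero]
    by_contra h
    exact hi (val_eq_add_of_Jmat_ne_zero (((mem_normalizedPerms _).1 hσ).1 i) h)

lemma Pf_Jmat : Pf (Jmat d R) = 1 := by
  rw [Pf, pfAux_Jmat, pfAux_Jmat, Int.cast_id, ← Int.cast_mul, ← Units.val_mul, Int.units_mul_self,
    Units.val_one, Int.cast_one]

end StandardSymplectic

section CayleyHamilton

theorem aeval_eq_zero_of_smul_one_eq_mul_charmatrix {n R : Type*} [Fintype n] [DecidableEq n]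
    [CommRing R] {M : Matrix n n R} {p : R[X]} {B : Matrix n n R[X]}
    (h : p • (1 : Matrix n n R[X]) = B * charmatrix M) : aeval M p = 0 := by
  have hpoly := congrArg matPolyEquiv h
  rw [map_mul, matPolyEquiv_charmatrix, matPolyEquiv_smul_one] at hpoly
  rw [aeval_def, ← eval_map, hpoly, eval_mul_X_sub_C]

variable {d : ℕ} {A : Type*} [CommRing A] (M : Matrix (Fin (2 * d)) (Fin (2 * d)) A)

lemma pfCharpoly_eq : pfCharpoly M = Pf (charmatrix M * Jmat d A[X]) := by
  rw [pfCharpoly, charmatrix, smul_one_eq_diagonal]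
  rfl

lemma charmatrix_mul_Jmat_apply (k l : Fin (2 * d)) :
    (charmatrix M * Jmat d A[X]) k l = C (Jmat d A k l) * X + C (-(M * Jmat d A) k l) := by
  have hcharmatrix : charmatrix M * Jmat d A[X] =
      (X : A[X]) • (Jmat d A).map C - (M * Jmat d A).map C := by
    rw [charmatrix, sub_mul, Matrix.map_mul, Jmat_map]
    simp [← smul_eq_diagonal_mul]
  rw [hcharmatrix, Matrix.sub_apply, Matrix.smul_apply, Matrix.map_apply, Matrix.map_apply,
    smul_eq_mul, X_mul_C, C_neg, sub_eq_add_neg]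

lemma natDegree_charmatrix_mul_Jmat_apply_le (k l : Fin (2 * d)) :
    ((charmatrix M * Jmat d A[X]) k l).natDegree ≤ 1 := by
  rw [charmatrix_mul_Jmat_apply]
  exact natDegree_linear_le

lemma map_coeff_one_charmatrix_mul_Jmat :
    (charmatrix M * Jmat d A[X]).map (fun p ↦ p.coeff 1) = Jmat d A := by
  ext k l
  simp [charmatrix_mul_Jmat_apply, coeff_C]

lemma natDegree_pfCharpoly_le : (pfCharpoly M).natDegree ≤ d := by
  rw [pfCharpoly_eq, Pf, ← C_eq_intCast]
  calc _ ≤ (pfAux (charmatrix M * Jmat d A[X])).natDegree := natDegree_C_mul_le _ _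
    _ ≤ d * 1 := natDegree_pfAux_le (natDegree_charmatrix_mul_Jmat_apply_le M)
    _ = d := mul_one d

lemma coeff_pfCharpoly : (pfCharpoly M).coeff d = 1 := by
  have hcoeff := coeff_pfAux (natDegree_charmatrix_mul_Jmat_apply_le M)
  rw [mul_one, map_coeff_one_charmatrix_mul_Jmat] at hcoeff
  rw [pfCharpoly_eq, Pf, ← C_eq_intCast, coeff_C_mul, hcoeff, ← Pf, Pf_Jmat]

variable {M}

lemma isAlternating_charmatrix_mul_Jmat (hM : IsAlternating (M * Jmat d A)) :
    IsAlternating (charmatrix M * Jmat d A[X]) where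
  transpose_eq := by
    ext1 k l
    rw [transpose_apply, Matrix.neg_apply, charmatrix_mul_Jmat_apply, charmatrix_mul_Jmat_apply,
      apply_eq_neg_of_transpose_eq_neg (isAlternating_Jmat d A).transpose_eq,
      apply_eq_neg_of_transpose_eq_neg hM.transpose_eq, map_neg, map_neg]
    ring
  diag_eq_zero i := by
    rw [charmatrix_mul_Jmat_apply, (isAlternating_Jmat d A).diag_eq_zero, hM.diag_eq_zero]
    simp

theorem aeval_pfCharpoly (hM : IsAlternating (M * Jmat d A)) : aeval M (pfCharpoly M) = 0 := by
  obtain ⟨G, hG⟩ := exists_mul_eq_Pf_smul_one (isAlternating_charmatrix_mul_Jmat hM)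
  rw [← pfCharpoly_eq] at hG
  refine aeval_eq_zero_of_smul_one_eq_mul_charmatrix (B := Jmat d A[X] * G) ?_
  have hJ := Jmat_mul_self d A[X]
  calc pfCharpoly M • (1 : Matrix (Fin (2 * d)) (Fin (2 * d)) A[X])
      = -(Jmat d A[X] * (pfCharpoly M • 1) * Jmat d A[X]) := by simp [hJ]
    _ = -(Jmat d A[X] * G * charmatrix M * (Jmat d A[X] * Jmat d A[X])) := by
      simp only [← hG, mul_assoc]
    _ = Jmat d A[X] * G * charmatrix M := by simp [hJ]

end CayleyHamilton

end SympDet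

open SympDet in
/-- **Pfaffian Cayley–Hamilton theorem.** -/
theorem stmt_0 {d : ℕ} (hd : 1 ≤ d) {A : Type u} [CommRing A]
    (M : Matrix (Fin (2 * d)) (Fin (2 * d)) A)
    (hM : sympTr M = M)
    (halt : (M * Jmat d A)ᵀ = -(M * Jmat d A))
    (hdiag : ∀ i, (M * Jmat d A) i i = 0) :
    (pfCharpoly M).Monic ∧ (pfCharpoly M).coeff d = 1 ∧
      (∀ i : ℕ, d < i → (pfCharpoly M).coeff i = 0) ∧
      Polynomial.aeval M (pfCharpoly M) = 0 := by
  have coeff_eq_one := coeff_pfCharpoly M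
  have natDegree_le := natDegree_pfCharpoly_le M
  refine ⟨Polynomial.monic_of_natDegree_le_of_coeff_eq_one d natDegree_le coeff_eq_one,
    coeff_eq_one, fun i hi ↦ ?_, aeval_pfCharpoly ⟨halt, hdiag⟩⟩
  exact Polynomial.coeff_eq_zero_of_natDegree_lt (natDegree_le.trans_lt hi)
end

section
/- Let A be a commutative ring with 2 ∈ A^×, let (R,*) be an involutive A-algebra, and let D : R → A be a 2d-dimensional *-determinant law. If P, P′ : R^+ → A are homogeneous degree-d polynomial laws such that both (D,P) and (D,P′) are weak symplectic determinant laws of dimension 2d, then P = P′. Moreover, writing χ^D(r,t) = Σ_{i=0}^{2d} (−1)^i Λ_i^D(r) t^{2d−i} and χ^P(r,t) = Σ_{i=0}^{d} (−1)^i T_i^P(r) t^{d−i}, one has the recursion Λ_i^D restricted to R^+ equals Σ_{j=0}^{i} T_j^P · T_{i−j}^P as polynomial laws R^+ → A for 1 ≤ i ≤ 2d, where T_j^P := 0 for j > d and T_0^P = 1. -/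
/-!
STATEMENT 1: uniqueness of the Pfaffian of a weak symplectic determinant law, and the
recursion `Λ_i^D|_{R⁺} = ∑_{j=0}^{i} T_j^P T_{i-j}^P` for `1 ≤ i ≤ 2d`.
-/

open scoped TensorProduct

universe u

namespace SympDet

/-! ### Polynomial laws valued in the base ring -/

variable (A : Type u) [CommRing A]

/-- An `A`-polynomial law on the `A`-module `M` with values in `A`: a family of maps
`M ⊗[A] B → B` (written `B ⊗[A] M → B`), one for each commutative `A`-algebra `B`,
natural in `B`. -/
structure PolyLaw (M : Type u) [AddCommGroup M] [Module A M] : Type (u + 1) where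
  toFun : ∀ (B : Type u) [CommRing B] [Algebra A B], B ⊗[A] M → B
  natural : ∀ (B B' : Type u) [CommRing B] [Algebra A B] [CommRing B'] [Algebra A B']
      (f : B →ₐ[A] B') (x : B ⊗[A] M),
      f (toFun B x) = toFun B' (LinearMap.rTensor M f.toLinearMap x)

variable {A}

/-- Homogeneity of degree `n` of a polynomial law. -/
def PolyLaw.IsHomog {M : Type u} [AddCommGroup M] [Module A M] (P : PolyLaw A M) (n : ℕ) : Prop :=
  ∀ (B : Type u) [CommRing B] [Algebra A B] (b : B) (x : B ⊗[A] M),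
    P.toFun B (b • x) = b ^ n * P.toFun B x

/-- The kernel of a polynomial law. -/
def PolyLaw.lawKer {M : Type u} [AddCommGroup M] [Module A M] (P : PolyLaw A M) : Set M :=
  {m | ∀ (B : Type u) [CommRing B] [Algebra A B] (b : B) (y : B ⊗[A] M),
    P.toFun B (b ⊗ₜ[A] m + y) = P.toFun B y}

/-- Multiplicativity of a polynomial law on an `A`-algebra `R`. -/
def PolyLaw.IsMult {R : Type u} [Ring R] [Algebra A R] (D : PolyLaw A R) : Prop :=
  ∀ (B : Type u) [CommRing B] [Algebra A B],
    D.toFun B 1 = 1 ∧ ∀ x y : B ⊗[A] R, D.toFun B (x * y) = D.toFun B x * D.toFun B y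

/-! ### Involutive algebras -/

variable (A) in
/-- An involutive `A`-algebra structure: an `A`-linear involutive anti-automorphism. -/
structure InvAlg (R : Type u) [Ring R] [Algebra A R] : Type u where
  star : R →ₗ[A] R
  star_one : star 1 = 1
  star_mul : ∀ x y : R, star (x * y) = star y * star x
  star_star : ∀ x : R, star (star x) = x

variable {R : Type u} [Ring R] [Algebra A R]

/-- The submodule of symmetric elements `R⁺`. -/
def InvAlg.plus (s : InvAlg A R) : Submodule A R :=
  LinearMap.ker (s.star - LinearMap.id)

theorem InvAlg.one_mem_plus (s : InvAlg A R) : (1 : R) ∈ s.plus := by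
  simp [InvAlg.plus, LinearMap.mem_ker, LinearMap.sub_apply, s.star_one]

/-- `1` as an element of `R⁺`. -/
def InvAlg.onePlus (s : InvAlg A R) : s.plus := ⟨1, s.one_mem_plus⟩

/-- The inclusion `B ⊗[A] R⁺ → B ⊗[A] R`. -/
noncomputable def InvAlg.incl (s : InvAlg A R) (B : Type u) [CommRing B] [Algebra A B] :
    B ⊗[A] ↥s.plus →ₗ[A] B ⊗[A] R :=
  LinearMap.lTensor B s.plus.subtype

/-- A weak symplectic determinant law of dimension `2d`. -/
structure IsWeakSympDet (s : InvAlg A R) (d : ℕ) (D : PolyLaw A R) (P : PolyLaw A ↥s.plus) :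
    Prop where
  mult : D.IsMult
  homog : D.IsHomog (2 * d)
  starInv : ∀ (B : Type u) [CommRing B] [Algebra A B] (x : B ⊗[A] R),
      D.toFun B (LinearMap.lTensor B s.star x) = D.toFun B x
  homogP : P.IsHomog d
  sq : ∀ (B : Type u) [CommRing B] [Algebra A B] (x : B ⊗[A] ↥s.plus),
      P.toFun B x ^ 2 = D.toFun B (s.incl B x)
  one : P.toFun A ((1 : A) ⊗ₜ[A] s.onePlus) = 1

/-! ### Characteristic polynomials and the Cayley-Hamilton ideal -/

/-- The characteristic polynomial `χ^P(x, t) = P_{B[t]}(t·e - x)` of a polynomial law,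
relative to a marked element `e` (the unit). -/
noncomputable def chPoly {M : Type u} [AddCommGroup M] [Module A M] (P : PolyLaw A M) (e : M)
    (B : Type u) [CommRing B] [Algebra A B] (x : B ⊗[A] M) : Polynomial B :=
  P.toFun (Polynomial B)
    ((Polynomial.X : Polynomial B) ⊗ₜ[A] e -
      LinearMap.rTensor M (IsScalarTower.toAlgHom A B (Polynomial B)).toLinearMap x)

/-- The coefficient `(-1)^i Λ_i` of `t^(n-i)` in the characteristic polynomial, with the
convention that it vanishes for `i > n`. -/
noncomputable def chCoeff {M : Type u} [AddCommGroup M] [Module A M] (P : PolyLaw A M) (e : M)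
    (n i : ℕ) (B : Type u) [CommRing B] [Algebra A B] (x : B ⊗[A] M) : B :=
  if i ≤ n then (-1 : B) ^ i * (chPoly P e B x).coeff (n - i) else 0

/-- `χ^P(x, x)`: the characteristic polynomial of `x ∈ (B ⊗ R)⁺` evaluated at `x` itself. -/
noncomputable def chEval (s : InvAlg A R) (P : PolyLaw A ↥s.plus) (B : Type u) [CommRing B]
    [Algebra A B] (x : B ⊗[A] ↥s.plus) : B ⊗[A] R :=
  Polynomial.aeval (s.incl B x) (chPoly P s.onePlus B x)

/-- The `A`-linear coefficient extraction map on multivariate polynomials. -/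
noncomputable def mvLcoeff {n : ℕ} (α : Fin n →₀ ℕ) : MvPolynomial (Fin n) A →ₗ[A] A where
  toFun p := MvPolynomial.coeff α p
  map_add' p q := MvPolynomial.coeff_add α p q
  map_smul' c p := MvPolynomial.coeff_smul α c p

/-- Extracting the coefficient of the monomial `t^α` from an element of `R[t_1,…,t_n]`. -/
noncomputable def tensorCoeff {n : ℕ} (α : Fin n →₀ ℕ) :
    (MvPolynomial (Fin n) A) ⊗[A] R →ₗ[A] R :=
  (TensorProduct.lid A R).toLinearMap ∘ₗ LinearMap.rTensor R (mvLcoeff α)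

/-- The generators `χ^P_α(r_1, …, r_n)` of the Cayley–Hamilton ideal of `P`:
the multihomogeneous coefficients of `χ^P(t_1 r_1 + ⋯ + t_n r_n, t_1 r_1 + ⋯ + t_n r_n)`. -/
def chGen (s : InvAlg A R) (P : PolyLaw A ↥s.plus) : Set R :=
  {y | ∃ (n : ℕ) (r : Fin n → ↥s.plus) (α : Fin n →₀ ℕ),
    y = tensorCoeff α
      (chEval s P (MvPolynomial (Fin n) A)
        (∑ i : Fin n, (MvPolynomial.X i : MvPolynomial (Fin n) A) ⊗ₜ[A] r i))}

/-- The Cayley–Hamilton ideal `CH(P)`: the two-sided ideal generated by the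
multihomogeneous coefficients of the characteristic polynomials. -/
def chIdeal (s : InvAlg A R) (P : PolyLaw A ↥s.plus) : TwoSidedIdeal R :=
  TwoSidedIdeal.span (chGen s P)

/-- A symplectic determinant law of dimension `2d`: a weak symplectic determinant law
such that `CH(P) ⊆ ker(D)`. -/
def IsSympDet (s : InvAlg A R) (d : ℕ) (D : PolyLaw A R) (P : PolyLaw A ↥s.plus) : Prop :=
  IsWeakSympDet s d D P ∧ ∀ y ∈ chIdeal s P, y ∈ D.lawKer

/-- A symplectic Cayley–Hamilton algebra of degree `2d`: a symplectic determinant law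
such that `χ^P(r, r) = 0` for all symmetric `r` over all base extensions. -/
def IsSympCH (s : InvAlg A R) (d : ℕ) (D : PolyLaw A R) (P : PolyLaw A ↥s.plus) : Prop :=
  IsSympDet s d D P ∧
    ∀ (B : Type u) [CommRing B] [Algebra A B] (x : B ⊗[A] ↥s.plus), chEval s P B x = 0

end SympDet

/-!
Restricted to the line through `x` in the direction `y`, a polynomial law `P` is an honest
polynomial `P(x + t y)`, and both claims are read off from lines through the unit `e`.

Uniqueness: `f(t) = P(e + t (x - e))` and `g(t) = P'(e + t (x - e))` have the same square, and the
constant term `P(e) + P'(e)` of `f + g` is a unit, so `f + g` is regular and `f = g`; at `t = 1`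
this is `P(x) = P'(x)`.

Recursion: homogeneity makes `P(x + t y)` and `P(y + t x)` reversals of each other, so the `i`-th
signed coefficient of the characteristic polynomial of `x` is the coefficient of `t ^ i` in
`P(e + t x)`, and the recursion compares coefficients in `P(e + t x) ^ 2 = D(e + t x)`.
-/

namespace SympDet

open Polynomial LaurentPolynomial

section Coefficients

variable {B : Type*} [CommRing B]

theorem mem_nonZeroDivisors_of_isUnit_coeff_zero {p : B[X]} (hp : IsUnit (p.coeff 0)) :
    p ∈ nonZeroDivisors B[X] := by
  nontriviality B
  refine mem_nonZeroDivisors_of_trailingCoeff ?_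
  rw [trailingCoeff_eq_coeff_zero hp.ne_zero]
  exact hp.mem_nonZeroDivisors

theorem eq_of_sq_eq_sq_of_isUnit_coeff_zero_add {p q : B[X]} (h : p ^ 2 = q ^ 2)
    (hu : IsUnit (p.coeff 0 + q.coeff 0)) : p = q := by
  have hreg := mem_nonZeroDivisors_of_isUnit_coeff_zero (p := p + q) (by rwa [coeff_add])
  have hmul : (p + q) * (p - q) = 0 := by linear_combination h
  exact sub_eq_zero.1 ((mul_left_mem_nonZeroDivisors_eq_zero_iff hreg).1 hmul)

theorem aeval_T_one (p : B[X]) : aeval (T 1 : B[T;T⁻¹]) p = toLaurent p := by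
  have h : aeval (T 1 : B[T;T⁻¹]) = toLaurentAlg (R := B) := algHom_ext (by simp)
  rw [h, toLaurentAlg_apply]

theorem aeval_T_neg_one (p : B[X]) : aeval (T (-1) : B[T;T⁻¹]) p = invert (toLaurent p) := by
  rw [← aeval_T_one, ← aeval_algHom_apply, invert_T]

theorem coeff_toLaurent_natCast (p : B[X]) (n : ℕ) : (toLaurent p).coeff n = p.coeff n := by
  rw [coeff_toLaurent]
  exact Finsupp.mapDomain_apply Nat.cast_injective _ n

theorem coeff_toLaurent_of_neg (p : B[X]) {n : ℤ} (hn : n < 0) : (toLaurent p).coeff n = 0 := by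
  rw [coeff_toLaurent]
  refine Finsupp.mapDomain_of_notMem_range _ _ ?_
  rintro ⟨m, rfl⟩
  exact absurd hn (Int.natCast_nonneg m).not_gt

theorem coeff_eq_of_toLaurent_eq_T_mul_invert {p q : B[X]} {d : ℕ}
    (h : toLaurent p = T d * invert (toLaurent q)) (i : ℕ) :
    q.coeff i = if i ≤ d then p.coeff (d - i) else 0 := by
  have hcoeff : q.coeff i = (toLaurent p).coeff (d - i) := by
    rw [h, T, AddMonoidAlgebra.coeff_single_mul_apply, one_mul, invert_apply,
      ← coeff_toLaurent_natCast]
    congr 1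
    ring
  rw [hcoeff]
  split_ifs with hi
  · rw [← Nat.cast_sub hi, coeff_toLaurent_natCast]
  · exact coeff_toLaurent_of_neg p (by omega)

end Coefficients

section ExtendScalars

variable {A : Type*} [CommRing A] {M : Type*} [AddCommGroup M] [Module A M]

theorem rTensor_toLinearMap_smul {B B' : Type*} [CommRing B] [Algebra A B] [CommRing B']
    [Algebra A B'] (f : B →ₐ[A] B') (b : B) (x : B ⊗[A] M) :
    LinearMap.rTensor M f.toLinearMap (b • x) = f b • LinearMap.rTensor M f.toLinearMap x := by
  induction x with
  | zero => simp
  | tmul c m => simp [TensorProduct.smul_tmul']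
  | add x y hx hy => simp only [smul_add, map_add, hx, hy]

variable (M) in
/-- The extension of scalars `B ⊗ M → B' ⊗ M` along a tower of algebras `A → B → B'`, in the form
in which `chPoly` uses it. -/
noncomputable abbrev extendScalars (B B' : Type*) [CommRing B] [Algebra A B] [CommRing B']
    [Algebra A B'] [Algebra B B'] [IsScalarTower A B B'] : B ⊗[A] M →ₗ[A] B' ⊗[A] M :=
  LinearMap.rTensor M (IsScalarTower.toAlgHom A B B').toLinearMap

theorem extendScalars_self {B : Type*} [CommRing B] [Algebra A B] (x : B ⊗[A] M) :
    extendScalars M B B x = x :=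
  LinearMap.rTensor_id_apply M B x

theorem rTensor_toLinearMap_extendScalars {B B' B'' : Type*} [CommRing B] [Algebra A B]
    [CommRing B'] [Algebra A B'] [Algebra B B'] [IsScalarTower A B B'] [CommRing B'']
    [Algebra A B''] [Algebra B B''] [IsScalarTower A B B''] (f : B' →ₐ[B] B'') (x : B ⊗[A] M) :
    LinearMap.rTensor M (f.restrictScalars A).toLinearMap (extendScalars M B B' x) =
      extendScalars M B B'' x := by
  rw [← LinearMap.rTensor_comp_apply, ← AlgHom.comp_toLinearMap]
  congr 3
  ext b
  exact f.commutes b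

theorem baseChange_extendScalars {N : Type*} [AddCommGroup N] [Module A N] (φ : M →ₗ[A] N)
    {B B' : Type*} [CommRing B] [Algebra A B] [CommRing B'] [Algebra A B'] [Algebra B B']
    [IsScalarTower A B B'] (x : B ⊗[A] M) :
    φ.baseChange B' (extendScalars M B B' x) = extendScalars N B B' (φ.baseChange B x) := by
  simp only [LinearMap.baseChange_eq_ltensor]
  rw [← LinearMap.comp_apply, ← LinearMap.comp_apply, LinearMap.lTensor_comp_rTensor,
    LinearMap.rTensor_comp_lTensor]

end ExtendScalars

namespace PolyLaw

variable {A : Type u} [CommRing A] {M : Type u} [AddCommGroup M] [Module A M]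

theorem ext {P P' : PolyLaw A M}
    (h : ∀ (B : Type u) [CommRing B] [Algebra A B] (x : B ⊗[A] M), P.toFun B x = P'.toFun B x) :
    P = P' := by
  obtain ⟨f, _⟩ := P
  obtain ⟨g, _⟩ := P'
  congr
  funext B _ _ x
  exact h B x

theorem toFun_one_tmul (P : PolyLaw A M) (e : M) (B : Type u) [CommRing B] [Algebra A B] :
    P.toFun B (1 ⊗ₜ e) = algebraMap A B (P.toFun A (1 ⊗ₜ e)) := by
  have hnat := P.natural A B (Algebra.ofId A B) (1 ⊗ₜ e)
  rw [LinearMap.rTensor_tmul, AlgHom.toLinearMap_apply, map_one, Algebra.ofId_apply] at hnat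
  exact hnat.symm

section Line

variable (P : PolyLaw A M) {B : Type u} [CommRing B] [Algebra A B]

/-- The restriction of `P` to the line through `x` in the direction `y`: the polynomial
`P(x + t y)` in `t`. -/
noncomputable def line (x y : B ⊗[A] M) : B[X] :=
  P.toFun B[X] (extendScalars M B B[X] x + (X : B[X]) • extendScalars M B B[X] y)

theorem aeval_line {B' : Type u} [CommRing B'] [Algebra A B'] [Algebra B B'] [IsScalarTower A B B']
    (b : B') (x y : B ⊗[A] M) :
    aeval b (P.line x y) =
      P.toFun B' (extendScalars M B B' x + b • extendScalars M B B' y) := by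
  have hnat := P.natural B[X] B' ((aeval b : B[X] →ₐ[B] B').restrictScalars A)
    (extendScalars M B B[X] x + (X : B[X]) • extendScalars M B B[X] y)
  rwa [map_add, rTensor_toLinearMap_smul, rTensor_toLinearMap_extendScalars,
    rTensor_toLinearMap_extendScalars, AlgHom.restrictScalars_apply, AlgHom.restrictScalars_apply,
    aeval_X] at hnat

theorem eval_line (b : B) (x y : B ⊗[A] M) : (P.line x y).eval b = P.toFun B (x + b • y) := by
  rw [← coe_aeval_eq_eval, aeval_line, extendScalars_self, extendScalars_self]

theorem coeff_zero_line (x y : B ⊗[A] M) : (P.line x y).coeff 0 = P.toFun B x := by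
  rw [coeff_zero_eq_eval_zero, eval_line, zero_smul, add_zero]

theorem line_smul (b : B) (x y : B ⊗[A] M) :
    P.line x (b • y) = (P.line x y).comp (Polynomial.C b * X) := by
  rw [comp_eq_aeval, aeval_line, line, rTensor_toLinearMap_smul, smul_smul, mul_comm]
  rfl

theorem chPoly_eq_line (e : M) (x : B ⊗[A] M) : chPoly P e B x = P.line (-x) (1 ⊗ₜ e) := by
  rw [chPoly, line, map_neg, LinearMap.rTensor_tmul, AlgHom.toLinearMap_apply, map_one,
    TensorProduct.smul_tmul', smul_eq_mul, mul_one, neg_add_eq_sub]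

variable {P}

-- Over `B[T;T⁻¹]`, homogeneity turns `P(x + T y)` into `T ^ d * P(y + T⁻¹ x)`.
theorem IsHomog.toLaurent_line {d : ℕ} (hP : P.IsHomog d) (x y : B ⊗[A] M) :
    toLaurent (P.line x y) = T d * invert (toLaurent (P.line y x)) := by
  rw [← aeval_T_one, ← aeval_T_neg_one, aeval_line, aeval_line, ← mul_one (d : ℤ), ← T_pow, ← hP,
    smul_add, smul_smul, ← T_add, add_neg_cancel, T_zero, one_smul, add_comm]

theorem IsHomog.coeff_line {d : ℕ} (hP : P.IsHomog d) (x y : B ⊗[A] M) (i : ℕ) :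
    (P.line x y).coeff i = if i ≤ d then (P.line y x).coeff (d - i) else 0 :=
  coeff_eq_of_toLaurent_eq_T_mul_invert (hP.toLaurent_line y x) i

theorem IsHomog.chCoeff_eq_coeff_line {d : ℕ} (hP : P.IsHomog d) (e : M) (i : ℕ)
    (x : B ⊗[A] M) : chCoeff P e d i B x = (P.line (1 ⊗ₜ e) x).coeff i := by
  have hneg : (P.line (1 ⊗ₜ e) x).coeff i = (-1) ^ i * (P.line (1 ⊗ₜ e) (-x)).coeff i := by
    conv_lhs => rw [← neg_neg x, ← neg_one_smul B (-x), line_smul, comp_C_mul_X_coeff, mul_comm]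
  rw [hneg, hP.coeff_line, ← chPoly_eq_line, mul_ite, mul_zero, chCoeff]

end Line

theorem eq_of_sq_eq_sq_of_isUnit_add {P P' : PolyLaw A M} {e : M}
    (hu : IsUnit (P.toFun A (1 ⊗ₜ e) + P'.toFun A (1 ⊗ₜ e)))
    (hsq : ∀ (B : Type u) [CommRing B] [Algebra A B] (x : B ⊗[A] M),
      P.toFun B x ^ 2 = P'.toFun B x ^ 2) : P = P' := by
  refine ext fun B _ _ x => ?_
  have hline : P.line (1 ⊗ₜ e) (x - 1 ⊗ₜ e) = P'.line (1 ⊗ₜ e) (x - 1 ⊗ₜ e) := by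
    refine eq_of_sq_eq_sq_of_isUnit_coeff_zero_add (hsq B[X] _) ?_
    rw [coeff_zero_line, coeff_zero_line, toFun_one_tmul P, toFun_one_tmul P', ← map_add]
    exact hu.map (algebraMap A B)
  simpa only [eval_line, one_smul, add_sub_cancel] using congrArg (eval 1) hline

section Sqrt

variable {N : Type u} [AddCommGroup N] [Module A N]

/-- `P` is a square root of the polynomial law `D` along the linear map `φ`: `P(x) ^ 2 = D(φ x)`
over every base change. A Pfaffian is the case where `φ` is the inclusion of the symmetric elements
of an involutive algebra. -/
def IsSqrtAlong (P : PolyLaw A M) (φ : M →ₗ[A] N) (D : PolyLaw A N) : Prop :=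
  ∀ (B : Type u) [CommRing B] [Algebra A B] (x : B ⊗[A] M),
    P.toFun B x ^ 2 = D.toFun B (φ.baseChange B x)

variable {P : PolyLaw A M} {φ : M →ₗ[A] N} {D : PolyLaw A N}

theorem IsSqrtAlong.line_sq (h : P.IsSqrtAlong φ D) {B : Type u} [CommRing B] [Algebra A B]
    (x y : B ⊗[A] M) : P.line x y ^ 2 = D.line (φ.baseChange B x) (φ.baseChange B y) := by
  rw [line, h, map_add, map_smul, baseChange_extendScalars, baseChange_extendScalars, line]

theorem IsSqrtAlong.chCoeff_baseChange (h : P.IsSqrtAlong φ D) {d : ℕ} (hD : D.IsHomog (2 * d))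
    (hP : P.IsHomog d) (e : M) (i : ℕ) {B : Type u} [CommRing B] [Algebra A B] (x : B ⊗[A] M) :
    chCoeff D (φ e) (2 * d) i B (φ.baseChange B x) =
      ∑ j ∈ Finset.range (i + 1), chCoeff P e d j B x * chCoeff P e d (i - j) B x := by
  simp only [hD.chCoeff_eq_coeff_line, hP.chCoeff_eq_coeff_line]
  rw [← LinearMap.baseChange_tmul, ← h.line_sq, sq, coeff_mul,
    Finset.Nat.sum_antidiagonal_eq_sum_range_succ_mk]

end Sqrt

end PolyLaw

end SympDet

open SympDet in
theorem stmt_1_general {A : Type u} [CommRing A] {M N : Type u} [AddCommGroup M] [Module A M]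
    [AddCommGroup N] [Module A N] (φ : M →ₗ[A] N) (e : M) (d : ℕ) (D : PolyLaw A N)
    (P P' : PolyLaw A M) (hu : IsUnit (P.toFun A (1 ⊗ₜ e) + P'.toFun A (1 ⊗ₜ e)))
    (hD : D.IsHomog (2 * d)) (hP : P.IsHomog d)
    (hsq : P.IsSqrtAlong φ D) (hsq' : P'.IsSqrtAlong φ D) :
    P = P' ∧
      ∀ (i : ℕ) (B : Type u) [CommRing B] [Algebra A B] (x : B ⊗[A] M),
        chCoeff D (φ e) (2 * d) i B (φ.baseChange B x) =
          ∑ j ∈ Finset.range (i + 1), chCoeff P e d j B x * chCoeff P e d (i - j) B x :=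
  ⟨PolyLaw.eq_of_sq_eq_sq_of_isUnit_add hu fun B _ _ x => (hsq B x).trans (hsq' B x).symm,
    fun i _ _ _ x => hsq.chCoeff_baseChange hD hP e i x⟩

open SympDet in
theorem stmt_1 {A : Type u} [CommRing A] {R : Type u} [Ring R] [Algebra A R]
    (h2 : IsUnit (2 : A)) (s : InvAlg A R) (d : ℕ) (D : PolyLaw A R)
    (P P' : PolyLaw A ↥s.plus)
    (hP : IsWeakSympDet s d D P) (hP' : IsWeakSympDet s d D P') :
    P = P' ∧
      ∀ i : ℕ, 1 ≤ i → i ≤ 2 * d →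
        ∀ (B : Type u) [CommRing B] [Algebra A B] (r : B ⊗[A] ↥s.plus),
          chCoeff D (1 : R) (2 * d) i B (s.incl B r) =
            ∑ j ∈ Finset.range (i + 1),
              chCoeff P s.onePlus d j B r * chCoeff P s.onePlus d (i - j) B r := by
  have h := stmt_1_general s.plus.subtype s.onePlus d D P P'
    (by rwa [hP.one, hP'.one, one_add_one_eq_two]) hP.homog hP.homogP hP.sq hP'.sq
  exact ⟨h.1, fun i _ _ => h.2 i⟩
end

section
/- Let A be a commutative ring with 2 ∈ A^×, let (R,*) be an involutive A-algebra, and let (D,P) be a weak symplectic determinant law of dimension 2d on (R,*). Then for every commutative A-algebra B, every x ∈ R ⊗_A B, and every y ∈ R^+ ⊗_A B such that P_B(y) is a non-zero-divisor in B, one has P_B(x·y·x^*) = D_B(x)·P_B(y). -/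
/-!
STATEMENT 2: for a weak symplectic determinant law `(D, P)` of dimension `2d`, for every
commutative `A`-algebra `B`, every `x ∈ R ⊗ B` and every symmetric `y` with `P_B(y)` a
non-zero-divisor, one has `P_B(x y x^*) = D_B(x) P_B(y)`. (The symmetric element `x y x^*`
is represented by any preimage `z ∈ R⁺ ⊗ B` of `x · y · x^*` in `R ⊗ B`.)
-/

open scoped TensorProduct

universe u

/-!
Deform `(x, y)` linearly to `(1, 1)` over `B[t]`: put `x_t = 1 + t (x - 1)`, `y_t = 1 + t (y - 1)`
and `z_t = x_t y_t x_t^*`. Both `p = P(z_t)` and `q = D(x_t) P(y_t)` are square roots of `D(z_t)`,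
so `(p + q) (p - q) = 0` in `B[t]`. At `t = 0` both `p` and `q` equal `1`, so `p + q` has constant
coefficient `2` and is a non-zero-divisor. Hence `p = q`, and `t = 1` gives the claim.
-/

open scoped Polynomial nonZeroDivisors

namespace SympDet

section Polynomial

theorem mem_nonZeroDivisors_of_coeff_zero {B : Type*} [CommRing B] {f : B[X]}
    (hf : f.coeff 0 ∈ B⁰) : f ∈ B[X]⁰ := by
  nontriviality B
  apply Polynomial.mem_nonZeroDivisors_of_trailingCoeff
  rwa [Polynomial.trailingCoeff_eq_coeff_zero (nonZeroDivisors.ne_zero hf)]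

theorem eq_of_sq_eq_sq_of_coeff_zero {B : Type*} [CommRing B] {p q : B[X]} (hpq : p ^ 2 = q ^ 2)
    (h0 : p.coeff 0 + q.coeff 0 ∈ B⁰) : p = q := by
  have hsum : p + q ∈ B[X]⁰ :=
    mem_nonZeroDivisors_of_coeff_zero (by rwa [Polynomial.coeff_add])
  have hmul : (p - q) * (p + q) = 0 := by linear_combination hpq
  exact sub_eq_zero.1 ((mul_right_mem_nonZeroDivisors_eq_zero_iff hsum).1 hmul)

/-- Evaluation `B[t] → B` at `b ∈ B`, as a homomorphism of `A`-algebras, the form in which it can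
be fed to a polynomial law. -/
noncomputable def evalAlgHom (A : Type*) [CommRing A] {B : Type*} [CommRing B] [Algebra A B]
    (b : B) : B[X] →ₐ[A] B :=
  (Polynomial.aeval b).restrictScalars A

theorem evalAlgHom_apply (A : Type*) [CommRing A] {B : Type*} [CommRing B] [Algebra A B] (b : B)
    (p : B[X]) : evalAlgHom A b p = p.eval b :=
  congrFun (Polynomial.coe_aeval_eq_eval b) p

end Polynomial

section ScalarExtension

variable {A : Type*} [CommRing A] {B C : Type*} [CommRing B] [Algebra A B] [CommRing C]
  [Algebra A C] {M N : Type*} [AddCommGroup M] [Module A M] [AddCommGroup N] [Module A N]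

theorem rTensor_algHom_smul (f : B →ₐ[A] C) (b : B) (a : B ⊗[A] M) :
    LinearMap.rTensor M f.toLinearMap (b • a) = f b • LinearMap.rTensor M f.toLinearMap a := by
  induction a with
  | zero => simp
  | add a a' ha ha' => simp only [smul_add, map_add, ha, ha']
  | tmul b' m => simp [TensorProduct.smul_tmul']

theorem rTensor_lTensor (f : B →ₗ[A] C) (g : M →ₗ[A] N) (a : B ⊗[A] M) :
    LinearMap.rTensor N f (LinearMap.lTensor B g a) =
      LinearMap.lTensor C g (LinearMap.rTensor M f a) := by
  rw [← LinearMap.comp_apply, LinearMap.rTensor_comp_lTensor, ← LinearMap.lTensor_comp_rTensor,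
    LinearMap.comp_apply]

theorem rTensor_algHom_mul {R : Type*} [Ring R] [Algebra A R] (f : B →ₐ[A] C) (a b : B ⊗[A] R) :
    LinearMap.rTensor R f.toLinearMap (a * b) =
      LinearMap.rTensor R f.toLinearMap a * LinearMap.rTensor R f.toLinearMap b :=
  map_mul (Algebra.TensorProduct.map f (AlgHom.id A R)) a b

/-- The line `a + t (a' - a)` over `B[t]` through two elements `a` (at `t = 0`) and `a'`
(at `t = 1`) of `B ⊗ M`. -/
noncomputable def polyLine (a a' : B ⊗[A] M) : B[X] ⊗[A] M :=
  AffineMap.lineMap (LinearMap.rTensor M Polynomial.CAlgHom.toLinearMap a)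
    (LinearMap.rTensor M Polynomial.CAlgHom.toLinearMap a') (Polynomial.X : B[X])

theorem rTensor_evalAlgHom_C (b : B) (a : B ⊗[A] M) :
    LinearMap.rTensor M (evalAlgHom A b).toLinearMap
      (LinearMap.rTensor M Polynomial.CAlgHom.toLinearMap a) = a := by
  have eval_comp_C : (evalAlgHom A b).toLinearMap ∘ₗ Polynomial.CAlgHom.toLinearMap =
      LinearMap.id := by
    ext c
    simp [evalAlgHom_apply]
  rw [← LinearMap.rTensor_comp_apply, eval_comp_C, LinearMap.rTensor_id_apply]

theorem rTensor_evalAlgHom_polyLine (b : B) (a a' : B ⊗[A] M) :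
    LinearMap.rTensor M (evalAlgHom A b).toLinearMap (polyLine a a') =
      AffineMap.lineMap a a' b := by
  simp only [polyLine, AffineMap.lineMap_apply_module', map_add, map_sub, rTensor_algHom_smul,
    rTensor_evalAlgHom_C, evalAlgHom_apply, Polynomial.eval_X]

end ScalarExtension

variable {A : Type u} [CommRing A] {R : Type u} [Ring R] [Algebra A R]
  {B : Type u} [CommRing B] [Algebra A B]

theorem PolyLaw.evalAlgHom_toFun_polyLine {M : Type u} [AddCommGroup M] [Module A M]
    (P : PolyLaw A M) (b : B) (a a' : B ⊗[A] M) :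
    evalAlgHom A b (P.toFun B[X] (polyLine a a')) = P.toFun B (AffineMap.lineMap a a' b) := by
  rw [P.natural, rTensor_evalAlgHom_polyLine]

namespace InvAlg

variable (s : InvAlg A R)

theorem mem_plus {r : R} : r ∈ s.plus ↔ s.star r = r := by
  simp [plus, sub_eq_zero]

theorem mul_mul_star_mem_plus (x : R) {y : R} (hy : y ∈ s.plus) : x * y * s.star x ∈ s.plus := by
  rw [mem_plus] at hy ⊢
  rw [s.star_mul, s.star_mul, s.star_star, hy, mul_assoc]

variable (B) in
/-- The involutive `B`-algebra `B ⊗ R`, with the `B`-linear extension of the involution of `R`. -/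
noncomputable def baseChange : InvAlg B (B ⊗[A] R) where
  star := s.star.baseChange B
  star_one := by simp [Algebra.TensorProduct.one_def, s.star_one]
  star_mul x y := by
    induction x with
    | zero => simp
    | add x x' hx hx' => simp only [add_mul, mul_add, map_add, hx, hx']
    | tmul b r =>
      induction y with
      | zero => simp
      | add y y' hy hy' => simp only [add_mul, mul_add, map_add, hy, hy']
      | tmul b' r' => simp [s.star_mul, mul_comm]
  star_star x := by
    have star_comp_star : s.star ∘ₗ s.star = LinearMap.id := LinearMap.ext s.star_star
    rw [LinearMap.baseChange_eq_ltensor, ← LinearMap.lTensor_comp_apply, star_comp_star,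
      LinearMap.lTensor_id_apply]

theorem baseChange_star_apply (x : B ⊗[A] R) :
    (s.baseChange B).star x = LinearMap.lTensor B s.star x :=
  rfl

theorem incl_mem_plus (y : B ⊗[A] s.plus) : s.incl B y ∈ (s.baseChange B).plus := by
  have star_comp_subtype : s.star ∘ₗ s.plus.subtype = s.plus.subtype :=
    LinearMap.ext fun r => s.mem_plus.1 r.2
  rw [mem_plus, baseChange_star_apply, incl, ← LinearMap.lTensor_comp_apply, star_comp_subtype]

theorem rTensor_incl {C : Type u} [CommRing C] [Algebra A C] (f : B →ₗ[A] C)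
    (y : B ⊗[A] s.plus) :
    LinearMap.rTensor R f (s.incl B y) = s.incl C (LinearMap.rTensor s.plus f y) :=
  rTensor_lTensor f s.plus.subtype y

section Invertible

variable [Invertible (2 : A)]

/-- The projection `r ↦ (r + r^*) / 2` of `R` onto its submodule of symmetric elements. -/
noncomputable def symPart : R →ₗ[A] s.plus :=
  LinearMap.codRestrict s.plus ((⅟2 : A) • (LinearMap.id + s.star)) fun r => by
    simp [mem_plus, s.star_star, add_comm]

theorem symPart_comp_subtype : s.symPart ∘ₗ s.plus.subtype = LinearMap.id := by
  ext r
  simp [symPart, s.mem_plus.1 r.2]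

theorem lTensor_symPart_incl (y : B ⊗[A] s.plus) :
    LinearMap.lTensor B s.symPart (s.incl B y) = y := by
  rw [incl, ← LinearMap.lTensor_comp_apply, symPart_comp_subtype, LinearMap.lTensor_id_apply]

theorem incl_lTensor_symPart {w : B ⊗[A] R} (hw : w ∈ (s.baseChange B).plus) :
    s.incl B (LinearMap.lTensor B s.symPart w) = w := by
  have subtype_comp_symPart :
      s.plus.subtype ∘ₗ s.symPart = (⅟2 : A) • (LinearMap.id + s.star) := rfl
  rw [mem_plus, baseChange_star_apply] at hw
  rw [incl, ← LinearMap.lTensor_comp_apply, subtype_comp_symPart, LinearMap.lTensor_smul,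
    LinearMap.lTensor_add, LinearMap.smul_apply, LinearMap.add_apply, LinearMap.lTensor_id_apply,
    hw, ← two_smul A w, invOf_smul_smul]

/-- The symmetric element `x y x^*`, as an element of `B ⊗ R⁺`; the projection `symPart` serves to
lift it from `B ⊗ R`. -/
noncomputable def starConj (x : B ⊗[A] R) (y : B ⊗[A] s.plus) : B ⊗[A] s.plus :=
  LinearMap.lTensor B s.symPart (x * s.incl B y * (s.baseChange B).star x)

theorem incl_starConj (x : B ⊗[A] R) (y : B ⊗[A] s.plus) :
    s.incl B (s.starConj x y) = x * s.incl B y * (s.baseChange B).star x :=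
  s.incl_lTensor_symPart ((s.baseChange B).mul_mul_star_mem_plus x (s.incl_mem_plus y))

theorem eq_starConj_of_incl_eq {x : B ⊗[A] R} {y z : B ⊗[A] s.plus}
    (hz : s.incl B z = x * s.incl B y * (s.baseChange B).star x) : z = s.starConj x y := by
  rw [starConj, ← hz, lTensor_symPart_incl]

theorem starConj_one (y : B ⊗[A] s.plus) : s.starConj 1 y = y :=
  (s.eq_starConj_of_incl_eq (by rw [(s.baseChange B).star_one, one_mul, mul_one])).symm

theorem rTensor_starConj {C : Type u} [CommRing C] [Algebra A C] (f : B →ₐ[A] C)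
    (x : B ⊗[A] R) (y : B ⊗[A] s.plus) :
    LinearMap.rTensor s.plus f.toLinearMap (s.starConj x y) =
      s.starConj (LinearMap.rTensor R f.toLinearMap x)
        (LinearMap.rTensor s.plus f.toLinearMap y) := by
  simp only [starConj, baseChange_star_apply, rTensor_lTensor, rTensor_algHom_mul, rTensor_incl]

end Invertible

end InvAlg

namespace IsWeakSympDet

variable {s : InvAlg A R} {d : ℕ} {D : PolyLaw A R} {P : PolyLaw A ↥s.plus}

theorem toFun_onePlus (h : IsWeakSympDet s d D P) :
    P.toFun B ((1 : B) ⊗ₜ[A] s.onePlus) = 1 := by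
  simpa [h.one] using (P.natural A B (Algebra.ofId A B) (1 ⊗ₜ[A] s.onePlus)).symm

variable [Invertible (2 : A)]

theorem toFun_starConj_sq (h : IsWeakSympDet s d D P) (x : B ⊗[A] R) (y : B ⊗[A] s.plus) :
    P.toFun B (s.starConj x y) ^ 2 = (D.toFun B x * P.toFun B y) ^ 2 := by
  rw [h.sq, s.incl_starConj, (h.mult B).2, (h.mult B).2, s.baseChange_star_apply, h.starInv,
    ← h.sq]
  ring

theorem toFun_starConj (h : IsWeakSympDet s d D P) (x : B ⊗[A] R) (y : B ⊗[A] s.plus) :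
    P.toFun B (s.starConj x y) = D.toFun B x * P.toFun B y := by
  let e : B ⊗[A] s.plus := 1 ⊗ₜ[A] s.onePlus
  let p := P.toFun B[X] (s.starConj (polyLine 1 x) (polyLine e y))
  let q := D.toFun B[X] (polyLine 1 x) * P.toFun B[X] (polyLine e y)
  have hp (b : B) : p.eval b =
      P.toFun B (s.starConj (AffineMap.lineMap 1 x b) (AffineMap.lineMap e y b)) := by
    rw [← evalAlgHom_apply A, P.natural, s.rTensor_starConj, rTensor_evalAlgHom_polyLine,
      rTensor_evalAlgHom_polyLine]
  have hq (b : B) : q.eval b =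
      D.toFun B (AffineMap.lineMap 1 x b) * P.toFun B (AffineMap.lineMap e y b) := by
    rw [← evalAlgHom_apply A, map_mul, D.evalAlgHom_toFun_polyLine, P.evalAlgHom_toFun_polyLine]
  have hp0 : p.coeff 0 = 1 := by
    rw [Polynomial.coeff_zero_eq_eval_zero, hp, AffineMap.lineMap_apply_zero,
      AffineMap.lineMap_apply_zero, s.starConj_one, h.toFun_onePlus]
  have hq0 : q.coeff 0 = 1 := by
    rw [Polynomial.coeff_zero_eq_eval_zero, hq, AffineMap.lineMap_apply_zero,
      AffineMap.lineMap_apply_zero, (h.mult B).1, h.toFun_onePlus, one_mul]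
  have two_unit : IsUnit (2 : B) :=
    map_ofNat (algebraMap A B) 2 ▸ (isUnit_of_invertible (2 : A)).map (algebraMap A B)
  have hpq : p = q := by
    apply eq_of_sq_eq_sq_of_coeff_zero (h.toFun_starConj_sq _ _)
    rw [hp0, hq0, one_add_one_eq_two]
    exact two_unit.mem_nonZeroDivisors
  simpa only [hp, hq, AffineMap.lineMap_apply_one] using congrArg (Polynomial.eval 1) hpq

end IsWeakSympDet

end SympDet

open SympDet in
theorem stmt_2_general {A : Type u} [CommRing A] {R : Type u} [Ring R] [Algebra A R]
    (h2 : IsUnit (2 : A)) (s : InvAlg A R) (d : ℕ) (D : PolyLaw A R) (P : PolyLaw A ↥s.plus)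
    (h : IsWeakSympDet s d D P) :
    ∀ (B : Type u) [CommRing B] [Algebra A B] (x : B ⊗[A] R) (y : B ⊗[A] ↥s.plus),
      ∀ z : B ⊗[A] ↥s.plus,
        s.incl B z = x * s.incl B y * LinearMap.lTensor B s.star x →
          P.toFun B z = D.toFun B x * P.toFun B y := by
  intro B _ _ x y z hz
  let := h2.invertible
  rw [s.eq_starConj_of_incl_eq hz, h.toFun_starConj]

open SympDet in
theorem stmt_2 {A : Type u} [CommRing A] {R : Type u} [Ring R] [Algebra A R]
    (h2 : IsUnit (2 : A)) (s : InvAlg A R) (d : ℕ) (D : PolyLaw A R) (P : PolyLaw A ↥s.plus)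
    (h : IsWeakSympDet s d D P) :
    ∀ (B : Type u) [CommRing B] [Algebra A B] (x : B ⊗[A] R) (y : B ⊗[A] ↥s.plus),
      P.toFun B y ∈ nonZeroDivisors B →
        ∀ z : B ⊗[A] ↥s.plus,
          s.incl B z = x * s.incl B y * LinearMap.lTensor B s.star x →
            P.toFun B z = D.toFun B x * P.toFun B y := by
  intro B _ _ x y _ z hz
  exact stmt_2_general h2 s d D P h B x y z hz
end
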